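/- arXiv:math/0210074 — 4 statements merged into one kernel-verified Lean document; each statement's English description precedes it below -/
import Mathlib

section
/- Let (R,m) be a local integral domain, let A and B be ideals of R, and let α ∈ R be a nonzero element with A·B ⊆ αR. If A is not a principal ideal, then A·B ⊆ α·m. -/
/-!
If some product `a * b` with `a ∈ A` and `b ∈ B` lies outside `α𝔪`, then `a * b` is a unit times
`α`, so `b` is regular and `bA ⊆ AB ⊆ αR = b(aR)`. Cancelling `b` gives `A = aR`.
-/

section

variable {R : Type*} [CommSemiring R]

theorem le_of_span_singleton_mul_le {I J : Ideal R} {b : R} (hb : IsLeftRegular b)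
    (h : Ideal.span {b} * I ≤ Ideal.span {b} * J) : I ≤ J := by
  intro x hx
  obtain ⟨y, hy, hxy⟩ := Ideal.span_singleton_mul_le_span_singleton_mul.mp h x hx
  exact hb hxy ▸ hy

variable [IsLocalRing R]

theorem associated_of_notMem_span_singleton_mul_maximalIdeal {α x : R}
    (hx : x ∈ Ideal.span {α}) (hxm : x ∉ Ideal.span {α} * IsLocalRing.maximalIdeal R) :
    Associated α x := by
  obtain ⟨c, rfl⟩ := Ideal.mem_span_singleton.mp hx
  have hc : IsUnit c := by
    by_contra hc
    exact hxm (Ideal.mul_mem_mul (Ideal.mem_span_singleton_self α) hc)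
  exact associated_mul_unit_right α c hc

theorem stmt1_general (A B : Ideal R) (α : R) (hα : IsRegular α)
    (hAB : A * B ≤ Ideal.span {α}) (hA : ¬ A.IsPrincipal) :
    A * B ≤ Ideal.span {α} * IsLocalRing.maximalIdeal R := by
  refine Ideal.mul_le.mpr fun a ha b hb ↦ ?_
  by_contra hab
  obtain ⟨u, hu⟩ : Associated α (a * b) :=
    associated_of_notMem_span_singleton_mul_maximalIdeal (hAB (Ideal.mul_mem_mul ha hb)) hab
  have hb_reg : IsRegular b := (isRegular_mul_iff.mp (hu ▸ hα.mul u.isUnit.isRegular)).2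
  have hbA : Ideal.span {b} * A ≤ Ideal.span {b} * Ideal.span {a} :=
    calc
      Ideal.span {b} * A ≤ B * A :=
        Ideal.mul_mono_left ((Ideal.span_singleton_le_iff_mem B).mpr hb)
      _ = A * B := mul_comm B A
      _ ≤ Ideal.span {α} := hAB
      _ ≤ Ideal.span {b * a} :=
        Ideal.span_singleton_le_span_singleton.mpr
          (by rw [mul_comm, ← hu, Units.mul_right_dvd])
      _ = Ideal.span {b} * Ideal.span {a} := (Ideal.span_singleton_mul_span_singleton b a).symm
  have hAa : A = Ideal.span {a} :=
    (le_of_span_singleton_mul_le hb_reg.left hbA).antisymm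
      ((Ideal.span_singleton_le_iff_mem A).mpr ha)
  exact hA ⟨a, hAa⟩

end

/-- Let `(R,m)` be a local integral domain, let `A` and `B` be ideals of
`R`, and let `α ∈ R` be a nonzero element with `A·B ⊆ αR`. If `A` is not a principal
ideal, then `A·B ⊆ α·m`. -/
theorem stmt1 {R : Type*} [CommRing R] [IsLocalRing R] [IsDomain R]
    (A B : Ideal R) (α : R) (hα : α ≠ 0)
    (hAB : A * B ≤ Ideal.span {α})
    (hA : ¬ A.IsPrincipal) :
    A * B ≤ Ideal.span {α} * IsLocalRing.maximalIdeal R :=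
  stmt1_general A B α (IsRegular.of_ne_zero hα) hAB hA
end

section
/- Let (R,m) be a Noetherian normal local domain and let J be an ideal of pure height one. Let n ≥ 2 be an integer such that the n-th symbolic power J^{(n)} is a principal ideal αR for some nonzero α ∈ R, while J^{(i)} is not principal for 0 < i < n. Then for all integers i with 0 < i < n one has J^{(i)} · J^{(n−i)} ⊆ J^{(n)}·m = α·m. -/
/-!
Since `J^{(i)} J^{(n-i)} ⊆ J^{(n)} = αR`, a product `ab` with `a ∈ J^{(i)}` and `b ∈ J^{(n-i)}` that
is not in `αm` equals `α` times a unit, so `αR = abR`. Then `xb ∈ abR` for every `x ∈ J^{(i)}`, and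
cancelling `b` gives `J^{(i)} = aR`, contradicting that `J^{(i)}` is not principal.
-/

/-- The `i`-th symbolic power of an ideal `J` of pure height one:
`J^{(i)} = {x ∈ R : x ∈ Jⁱ·R_P for every height-one prime ideal P of R}`, realized as
the intersection of the contractions of `Jⁱ·R_P` along `R → R_P` over all height-one
primes `P`. -/
def symbolicPower {R : Type*} [CommRing R] (J : Ideal R) (i : ℕ) : Ideal R :=
  sInf {I : Ideal R | ∃ (P : Ideal R) (hP : P.IsPrime),
    Order.height (⟨P, hP⟩ : PrimeSpectrum R) = 1 ∧
    I = Ideal.comap (algebraMap R (Localization (@Ideal.primeCompl R _ P hP)))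
      (Ideal.map (algebraMap R (Localization (@Ideal.primeCompl R _ P hP))) (J ^ i))}

/-- An ideal `J` of `R` has pure height one if every associated prime of `R/J`
has height one. -/
def IsPureHeightOne {R : Type*} [CommRing R] (J : Ideal R) : Prop :=
  ∀ P ∈ associatedPrimes R (R ⧸ J), ∀ (hP : Ideal.IsPrime P),
    Order.height (⟨P, hP⟩ : PrimeSpectrum R) = 1

section CommSemiring

variable {R : Type*} [CommSemiring R] {I K : Ideal R}

theorem eq_span_singleton_of_mul_le_span_singleton_mul {a b : R} (ha : a ∈ I) (hb : b ∈ K)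
    (hreg : IsRegular b) (h : I * K ≤ Ideal.span {a * b}) : I = Ideal.span {a} := by
  refine le_antisymm (fun x hx => ?_) ((Ideal.span_singleton_le_iff_mem I).mpr ha)
  obtain ⟨r, hr⟩ : a * b ∣ x * b := Ideal.mem_span_singleton.mp (h (Ideal.mul_mem_mul hx hb))
  have hxa : x = a * r := hreg.right (hr.trans (mul_right_comm a b r))
  exact Ideal.mem_span_singleton.mpr ⟨r, hxa⟩

theorem mul_le_span_singleton_mul_maximalIdeal [IsLocalRing R] {α : R} (hα : IsRegular α)
    (hI : ¬ I.IsPrincipal) (h : I * K ≤ Ideal.span {α}) :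
    I * K ≤ Ideal.span {α} * IsLocalRing.maximalIdeal R := by
  refine Ideal.mul_le.mpr fun a ha b hb => ?_
  obtain ⟨c, hc⟩ : α ∣ a * b := Ideal.mem_span_singleton.mp (h (Ideal.mul_mem_mul ha hb))
  have hc_nonunit : ¬ IsUnit c := fun hunit => by
    have hspan : Ideal.span {a * b} = Ideal.span {α} := by
      rw [hc, Ideal.span_singleton_mul_right_unit hunit]
    have hreg : IsRegular (a * b) := hc ▸ hα.mul hunit.isRegular
    exact hI ⟨a, eq_span_singleton_of_mul_le_span_singleton_mul ha hb
      (isRegular_mul_iff.mp hreg).2 (h.trans hspan.ge)⟩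
  rw [hc]
  exact Ideal.mul_mem_mul (Ideal.mem_span_singleton_self α)
    ((IsLocalRing.mem_maximalIdeal c).mpr hc_nonunit)

end CommSemiring

section SymbolicPower

variable {R : Type*} [CommRing R] {J : Ideal R}

theorem mem_symbolicPower {i : ℕ} {x : R} :
    x ∈ symbolicPower J i ↔ ∀ (P : Ideal R) (hP : P.IsPrime),
      Order.height (⟨P, hP⟩ : PrimeSpectrum R) = 1 →
        algebraMap R (Localization.AtPrime P) x ∈
          (J ^ i).map (algebraMap R (Localization.AtPrime P)) := by
  constructor
  · intro hx P hP hheight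
    exact Submodule.mem_sInf.mp hx _ ⟨P, hP, hheight, rfl⟩
  · intro hx
    refine Submodule.mem_sInf.mpr ?_
    rintro _ ⟨P, hP, hheight, rfl⟩
    exact hx P hP hheight

theorem symbolicPower_mul_symbolicPower_le (i j : ℕ) :
    symbolicPower J i * symbolicPower J j ≤ symbolicPower J (i + j) := by
  refine Ideal.mul_le.mpr fun a ha b hb => mem_symbolicPower.mpr fun P hP hheight => ?_
  rw [map_mul, pow_add, Ideal.map_mul]
  exact Ideal.mul_mem_mul (mem_symbolicPower.mp ha P hP hheight)
    (mem_symbolicPower.mp hb P hP hheight)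

theorem stmt2_general [IsLocalRing R] {n i : ℕ} {α : R} (hα : IsRegular α)
    (hprin : symbolicPower J n = Ideal.span {α}) (hin : i ≤ n)
    (hnotprin : ¬ (symbolicPower J i).IsPrincipal) :
    symbolicPower J i * symbolicPower J (n - i)
        ≤ symbolicPower J n * IsLocalRing.maximalIdeal R
      ∧ symbolicPower J n * IsLocalRing.maximalIdeal R
        = Ideal.span {α} * IsLocalRing.maximalIdeal R := by
  have hle : symbolicPower J i * symbolicPower J (n - i) ≤ symbolicPower J n := by
    simpa only [Nat.add_sub_cancel' hin] using symbolicPower_mul_symbolicPower_le (J := J) i (n - i)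
  rw [hprin] at hle ⊢
  exact ⟨mul_le_span_singleton_mul_maximalIdeal hα hnotprin hle, rfl⟩

end SymbolicPower

/-- Let `(R,m)` be a Noetherian normal local domain and let `J` be an ideal
of pure height one. Let `n ≥ 2` be an integer such that the `n`-th symbolic power
`J^{(n)}` is a principal ideal `αR` for some nonzero `α ∈ R`, while `J^{(i)}` is not
principal for `0 < i < n`. Then for all integers `i` with `0 < i < n` one has
`J^{(i)} · J^{(n−i)} ⊆ J^{(n)}·m = α·m`. -/
theorem stmt2 {R : Type*} [CommRing R] [IsNoetherianRing R] [IsLocalRing R] [IsDomain R]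
    [IsIntegrallyClosed R]
    (J : Ideal R) (hJ : IsPureHeightOne J)
    (n : ℕ) (hn : 2 ≤ n) (α : R) (hα : α ≠ 0)
    (hprin : symbolicPower J n = Ideal.span {α})
    (hnotprin : ∀ i : ℕ, 0 < i → i < n → ¬ (symbolicPower J i).IsPrincipal) :
    ∀ i : ℕ, 0 < i → i < n →
      symbolicPower J i * symbolicPower J (n - i)
        ≤ symbolicPower J n * IsLocalRing.maximalIdeal R
      ∧ symbolicPower J n * IsLocalRing.maximalIdeal R
        = Ideal.span {α} * IsLocalRing.maximalIdeal R :=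
  fun i hi hin =>
    stmt2_general (IsRegular.of_ne_zero hα) hprin hin.le (hnotprin i hi hin)
end

section
/- Let R be a Noetherian normal domain, let J be a nonzero ideal of R of pure height one, and let y₁ be a nonzero element of J. Then there exist an element y₂ ∈ R that lies in no minimal prime of the ideal y₁R, and an element γ ∈ J, such that y₂^i · J^{(i)} ⊆ γ^i R for all positive integers i. -/
section IntegrallyClosed

variable {R : Type*} [CommRing R] [IsDomain R] [IsIntegrallyClosed R]

/-- The hypothesis says that `c / b` maps `I` into itself, which makes `c / b` integral over `R`. -/
theorem dvd_of_forall_mem_exists_mul_eq_mul {I : Ideal R} (hI : I.FG) (hI0 : I ≠ ⊥) {b c : R}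
    (hb : b ≠ 0) (h : ∀ p ∈ I, ∃ q ∈ I, p * c = b * q) : b ∣ c := by
  let K := FractionRing R
  have hbK : algebraMap R K b ≠ 0 := by simpa using hb
  let N : Submodule R K := Submodule.map (Algebra.linearMap R K) I
  have hN0 : N ≠ ⊥ := by
    obtain ⟨p, hp, hp0⟩ := Submodule.exists_mem_ne_zero_of_ne_bot hI0
    exact (Submodule.ne_bot_iff N).2 ⟨algebraMap R K p, ⟨p, hp, rfl⟩, by simpa using hp0⟩
  have hstable : ∀ y ∈ N, (algebraMap R K c / algebraMap R K b) • y ∈ N := by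
    rintro _ ⟨p, hp, rfl⟩
    obtain ⟨q, hq, hpq⟩ := h p hp
    refine ⟨q, hq, ?_⟩
    rw [Algebra.linearMap_apply, Algebra.linearMap_apply, smul_eq_mul, div_mul_eq_mul_div,
      eq_div_iff hbK, ← map_mul, ← map_mul, mul_comm q, ← hpq, mul_comm p]
  obtain ⟨y, hy⟩ := IsIntegrallyClosed.algebraMap_eq_of_integral
    (isIntegral_of_smul_mem_submodule N hN0 (Submodule.FG.map _ hI) _ hstable)
  refine ⟨y, IsFractionRing.injective R K ?_⟩
  rw [map_mul, hy, mul_div_cancel₀ _ hbK]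

variable [IsNoetherianRing R]

theorem height_eq_one_of_forall_mem_iff_dvd_mul {P : Ideal R} [hP : P.IsPrime] {b c : R}
    (hb : b ≠ 0) (hc : ∀ r, r ∈ P ↔ b ∣ r * c) : P.height = 1 := by
  have hbP : b ∈ P := (hc b).2 (dvd_mul_right b c)
  have hP0 : P ≠ ⊥ := (Submodule.ne_bot_iff P).2 ⟨b, hbP, hb⟩
  have hbc : ¬ b ∣ c := fun h ↦ hP.ne_top <| (Ideal.eq_top_iff_one P).2 <| (hc 1).2 <| by
    rwa [one_mul]
  obtain ⟨t, ht, s, hs, hts⟩ : ∃ t ∈ P, ∃ s ∉ P, t * c = b * s := by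
    by_contra! H
    refine hbc (dvd_of_forall_mem_exists_mul_eq_mul (IsNoetherian.noetherian P) hP0 hb
      fun p hp ↦ ?_)
    obtain ⟨q, hq⟩ := (hc p).1 hp
    exact ⟨q, by_contra fun hqP ↦ H p hp q hqP hq, hq⟩
  -- The relation `t * c = b * s` makes `t` a generator of `P` after inverting `s`.
  have hdvd : ∀ p ∈ P, t ∣ s * p := fun p hp ↦ by
    obtain ⟨k, hk⟩ := (hc p).1 hp
    exact ⟨k, mul_left_cancel₀ hb (by linear_combination (-p) * hts + t * hk)⟩
  have hmin : P ∈ (Ideal.span {t}).minimalPrimes := by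
    refine ⟨⟨hP, (Ideal.span_singleton_le_iff_mem P).2 ht⟩, fun Q ⟨hQ, htQ⟩ hQP p hp ↦ ?_⟩
    exact (hQ.mem_or_mem (htQ (Ideal.mem_span_singleton.2 (hdvd p hp)))).resolve_left
      fun hsQ ↦ hs (hQP hsQ)
  exact le_antisymm (Ideal.height_le_one_of_isPrincipal_of_mem_minimalPrimes _ P hmin)
    (Order.one_le_iff_ne_zero.2 (Ideal.height_eq_zero_iff_eq_bot.not.2 hP0))

theorem dvd_of_forall_height_eq_one {b x : R} (hb : b ≠ 0)
    (h : ∀ (P : Ideal R) [P.IsPrime], P.height = 1 → ∃ s ∉ P, b ∣ s * x) : b ∣ x := by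
  by_contra hx
  have hcolon : ∀ z r : R, r ∈ (⊥ : Submodule R (R ⧸ Ideal.span {b})).colon
      {Ideal.Quotient.mk (Ideal.span {b}) z} ↔ b ∣ r * z := fun z r ↦ by
    rw [Submodule.mem_colon_singleton, Submodule.mem_bot, ← Ideal.mem_span_singleton,
      ← Ideal.Quotient.eq_zero_iff_mem, map_mul, Algebra.smul_def, Ideal.Quotient.algebraMap_eq]
  have hx0 : Ideal.Quotient.mk (Ideal.span {b}) x ≠ 0 := by
    rwa [Ne, Ideal.Quotient.eq_zero_iff_mem, Ideal.mem_span_singleton]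
  obtain ⟨P, hPass, hle⟩ := exists_le_isAssociatedPrime_of_isNoetherianRing R _ hx0
  obtain ⟨hP, y, rfl⟩ := isAssociatedPrime_iff.1 hPass
  obtain ⟨c, rfl⟩ := Ideal.Quotient.mk_surjective y
  obtain ⟨s, hs, hsx⟩ := h _ (height_eq_one_of_forall_mem_iff_dvd_mul hb (hcolon c))
  exact hs (hle ((hcolon x s).2 hsx))

end IntegrallyClosed

section SemilocalLocalization

variable {R : Type*} [CommRing R] {s : Set (PrimeSpectrum R)}

theorem mem_iInf_primeCompl {r : R} :
    r ∈ ⨅ p ∈ s, p.asIdeal.primeCompl ↔ ∀ p ∈ s, r ∉ p.asIdeal := by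
  simp only [Submonoid.mem_iInf, Ideal.mem_primeCompl_iff]

theorem iInf_primeCompl_le_nonZeroDivisors [IsDomain R] (hs : s.Nonempty) :
    ⨅ p ∈ s, p.asIdeal.primeCompl ≤ nonZeroDivisors R :=
  let ⟨p, hp⟩ := hs
  (iInf₂_le p hp).trans p.asIdeal.primeCompl_le_nonZeroDivisors

variable (T : Type*) [CommRing T] [Algebra R T]
  [IsLocalization (⨅ p ∈ s, p.asIdeal.primeCompl) T]

theorem exists_under_le_of_isLocalization_iInf_primeCompl (hfin : s.Finite) {Q : Ideal T}
    (hQ : Q ≠ ⊤) : ∃ p ∈ s, Q.under R ≤ p.asIdeal := by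
  have hsub : (Q.under R : Set R) ⊆ ⋃ I ∈ PrimeSpectrum.asIdeal '' s, I := by
    by_contra hnot
    obtain ⟨r, hrQ, hr⟩ := Set.not_subset.1 hnot
    have hrM : r ∈ ⨅ p ∈ s, p.asIdeal.primeCompl := mem_iInf_primeCompl.2 fun p hp hrp ↦
      hr (Set.mem_biUnion (Set.mem_image_of_mem _ hp) hrp)
    exact hQ (Q.eq_top_of_isUnit_mem hrQ (IsLocalization.map_units T ⟨r, hrM⟩))
  obtain ⟨_, ⟨p, hp, rfl⟩, hle⟩ :=
    (Ideal.subset_union_prime_finite (hfin.image PrimeSpectrum.asIdeal) (f := id) ⊥ ⊥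
      (by rintro _ ⟨p, -, rfl⟩ - -; exact p.isPrime)).1 hsub
  exact ⟨p, hp, hle⟩

theorem finite_setOf_isMaximal_of_isLocalization_iInf_primeCompl (hfin : s.Finite) :
    {Q : Ideal T | Q.IsMaximal}.Finite := by
  let M : Submonoid R := ⨅ p ∈ s, p.asIdeal.primeCompl
  refine (hfin.image fun p ↦ p.asIdeal.map (algebraMap R T)).subset fun Q hQ ↦ ?_
  obtain ⟨p, hp, hle⟩ := exists_under_le_of_isLocalization_iInf_primeCompl T hfin hQ.ne_top
  have hmap : p.asIdeal.map (algebraMap R T) ≠ ⊤ := by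
    rw [IsLocalization.map_algebraMap_ne_top_iff_disjoint M]
    exact Set.disjoint_left.2 fun r hr ↦ mem_iInf_primeCompl.1 hr p hp
  refine ⟨p, hp, (hQ.eq_of_le hmap ?_).symm⟩
  rw [← IsLocalization.map_under M T Q]
  exact Ideal.map_mono hle

theorem krullDimLE_one_of_isLocalization_iInf_primeCompl (hfin : s.Finite)
    (hht : ∀ p ∈ s, p.asIdeal.height ≤ 1) : Ring.KrullDimLE 1 T := by
  rw [Ring.krullDimLE_iff, ringKrullDim_le_iff_height_le]
  intro Q hQ
  obtain ⟨p, hp, hle⟩ := exists_under_le_of_isLocalization_iInf_primeCompl T hfin hQ.ne_top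
  rw [← IsLocalization.height_under (⨅ p ∈ s, p.asIdeal.primeCompl) Q]
  exact_mod_cast (Ideal.height_mono hle).trans (hht p hp)

theorem isPrincipalIdealRing_of_isLocalization_iInf_primeCompl [IsDomain R] [IsNoetherianRing R]
    [IsIntegrallyClosed R] (hfin : s.Finite) (hs : s.Nonempty)
    (hht : ∀ p ∈ s, p.asIdeal.height ≤ 1) : IsPrincipalIdealRing T := by
  have hM := iInf_primeCompl_le_nonZeroDivisors hs
  have : IsDomain T := IsLocalization.isDomain_of_le_nonZeroDivisors T hM
  have : IsNoetherianRing T :=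
    IsLocalization.isNoetherianRing (⨅ p ∈ s, p.asIdeal.primeCompl) T inferInstance
  have : IsIntegrallyClosed T := isIntegrallyClosed_of_isLocalization T _ hM
  have : Ring.KrullDimLE 1 T :=
    krullDimLE_one_of_isLocalization_iInf_primeCompl T hfin hht
  have : IsDedekindDomain T :=
    { maximalOfPrime := Ring.krullDimLE_one_iff_of_noZeroDivisors.1 this _ }
  exact IsPrincipalIdealRing.of_finite_maximals
    (finite_setOf_isMaximal_of_isLocalization_iInf_primeCompl T hfin)

end SemilocalLocalization

theorem exists_mem_forall_mul_mem_of_fg {R : Type*} [CommRing R] {M : Submonoid R} {I J : Ideal R}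
    (hJ : J.FG) (h : ∀ x ∈ J, ∃ m ∈ M, m * x ∈ I) : ∃ m ∈ M, ∀ x ∈ J, m * x ∈ I := by
  induction J, hJ using Submodule.fg_induction with
  | singleton a =>
    obtain ⟨m, hm, hma⟩ := h a (Submodule.mem_span_singleton_self a)
    refine ⟨m, hm, fun x hx ↦ ?_⟩
    obtain ⟨r, rfl⟩ := Submodule.mem_span_singleton.1 hx
    rw [smul_eq_mul, mul_left_comm]
    exact I.mul_mem_left r hma
  | sup J₁ J₂ _ _ ih₁ ih₂ =>
    obtain ⟨m₁, hm₁, h₁⟩ := ih₁ fun x hx ↦ h x (Submodule.mem_sup_left hx)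
    obtain ⟨m₂, hm₂, h₂⟩ := ih₂ fun x hx ↦ h x (Submodule.mem_sup_right hx)
    refine ⟨m₁ * m₂, M.mul_mem hm₁ hm₂, fun x hx ↦ ?_⟩
    obtain ⟨y, hy, z, hz, rfl⟩ := Submodule.mem_sup.1 hx
    have hdecomp : m₁ * m₂ * (y + z) = m₂ * (m₁ * y) + m₁ * (m₂ * z) := by ring
    rw [hdecomp]
    exact I.add_mem (I.mul_mem_left m₂ (h₁ y hy)) (I.mul_mem_left m₁ (h₂ z hz))

theorem exists_mem_forall_dvd_mul_of_isPrincipal_map {R : Type*} [CommRing R] (M : Submonoid R)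
    (T : Type*) [CommRing T] [Algebra R T] [IsLocalization M T] {J : Ideal R} (hJ : J.FG)
    (hprin : (J.map (algebraMap R T)).IsPrincipal) :
    ∃ γ ∈ J, ∃ m ∈ M, ∀ x ∈ J, γ ∣ m * x := by
  obtain ⟨w, hw⟩ := hprin.principal
  rw [Ideal.submodule_span_eq] at hw
  obtain ⟨⟨γ, d⟩, hγ⟩ := (IsLocalization.mem_map_algebraMap_iff M T).1
    (hw ▸ Ideal.mem_span_singleton_self w)
  have hmap : J.map (algebraMap R T) = (Ideal.span {(γ : R)}).map (algebraMap R T) := by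
    rw [hw, Ideal.map_span, Set.image_singleton, ← hγ,
      Ideal.span_singleton_mul_right_unit (IsLocalization.map_units T d)]
  obtain ⟨m, hm, hmJ⟩ := exists_mem_forall_mul_mem_of_fg (M := M) hJ fun x hx ↦
    (IsLocalization.algebraMap_mem_map_algebraMap_iff M T (Ideal.span {(γ : R)}) x).1
      (hmap ▸ Ideal.mem_map_of_mem _ hx)
  exact ⟨γ, γ.2, m, hm, fun x hx ↦ Ideal.mem_span_singleton.1 (hmJ x hx)⟩

theorem exists_ne_zero_forall_dvd_mul_of_finite {R : Type*} [CommRing R] [IsDomain R]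
    [IsNoetherianRing R] [IsIntegrallyClosed R] (J : Ideal R) {s : Set (PrimeSpectrum R)}
    (hfin : s.Finite) (hht : ∀ p ∈ s, p.asIdeal.height ≤ 1) :
    ∃ γ ∈ J, ∃ u ≠ 0, (∀ p ∈ s, u ∉ p.asIdeal) ∧ ∀ x ∈ J, γ ∣ u * x := by
  -- Adding the zero ideal to `s` makes `u ≠ 0` part of the avoidance condition.
  let s' := insert ⊥ s
  have hht' : ∀ p ∈ s', p.asIdeal.height ≤ 1 :=
    Set.forall_mem_insert.2 ⟨by simp, hht⟩
  let M : Submonoid R := ⨅ p ∈ s', p.asIdeal.primeCompl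
  have : IsPrincipalIdealRing (Localization M) :=
    isPrincipalIdealRing_of_isLocalization_iInf_primeCompl _ (hfin.insert ⊥)
      (Set.insert_nonempty ⊥ s) hht'
  obtain ⟨γ, hγ, u, hu, hdvd⟩ := exists_mem_forall_dvd_mul_of_isPrincipal_map M (Localization M)
    (IsNoetherian.noetherian J) (IsPrincipalIdealRing.principal _)
  obtain ⟨hu0, hus⟩ := Set.forall_mem_insert.1 (mem_iInf_primeCompl.1 hu)
  exact ⟨γ, hγ, u, by simpa using hu0, hus, hdvd⟩

theorem mem_symbolicPower_iff {R : Type*} [CommRing R] {J : Ideal R} {i : ℕ} {x : R} :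
    x ∈ symbolicPower J i ↔
      ∀ (P : Ideal R) [P.IsPrime], P.height = 1 → ∃ s ∉ P, s * x ∈ J ^ i := by
  have hloc (P : Ideal R) [P.IsPrime] :
      x ∈ ((J ^ i).map (algebraMap R (Localization P.primeCompl))).comap (algebraMap R _) ↔
        ∃ s ∉ P, s * x ∈ J ^ i :=
    Ideal.mem_comap.trans (IsLocalization.algebraMap_mem_map_algebraMap_iff P.primeCompl _ _ x)
  rw [symbolicPower, Submodule.mem_sInf]
  constructor
  · intro h P hP hP1
    have hP1' := (PrimeSpectrum.height_eq_orderHeight ⟨P, hP⟩).symm.trans hP1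
    exact (hloc P).1 (h _ ⟨P, hP, hP1', rfl⟩)
  · rintro h _ ⟨P, hP, hP1, rfl⟩
    exact (hloc P).2 (h P ((PrimeSpectrum.height_eq_orderHeight ⟨P, hP⟩).trans hP1))

theorem pow_dvd_pow_mul_of_mem_pow {R : Type*} [CommRing R] {J : Ideal R} {γ u : R}
    (h : ∀ x ∈ J, γ ∣ u * x) (i : ℕ) {z : R} (hz : z ∈ J ^ i) : γ ^ i ∣ u ^ i * z := by
  have hle : Ideal.span {u} * J ≤ Ideal.span {γ} :=
    Ideal.span_singleton_mul_le_iff.2 fun x hx ↦ Ideal.mem_span_singleton.2 (h x hx)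
  have hpow := Ideal.pow_right_mono hle i
  rw [mul_pow, Ideal.span_singleton_pow, Ideal.span_singleton_pow,
    Ideal.span_singleton_mul_le_iff] at hpow
  exact Ideal.mem_span_singleton.1 (hpow z hz)

theorem pow_dvd_pow_mul_of_mem_symbolicPower {R : Type*} [CommRing R] [IsDomain R]
    [IsNoetherianRing R] [IsIntegrallyClosed R] {J : Ideal R} {γ u : R} (hγ : γ ≠ 0)
    (h : ∀ x ∈ J, γ ∣ u * x) (i : ℕ) {x : R} (hx : x ∈ symbolicPower J i) :
    γ ^ i ∣ u ^ i * x := by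
  refine dvd_of_forall_height_eq_one (pow_ne_zero i hγ) fun P _ hP ↦ ?_
  obtain ⟨s, hs, hsx⟩ := mem_symbolicPower_iff.1 hx P hP
  exact ⟨s, hs, by rw [mul_left_comm]; exact pow_dvd_pow_mul_of_mem_pow h i hsx⟩

theorem stmt3_general {R : Type*} [CommRing R] [IsNoetherianRing R] [IsDomain R]
    [IsIntegrallyClosed R] (J : Ideal R) (hJ : J ≠ ⊥) {s : Set (PrimeSpectrum R)}
    (hfin : s.Finite) (hht : ∀ p ∈ s, p.asIdeal.height ≤ 1) :
    ∃ y₂ γ : R, (∀ p ∈ s, y₂ ∉ p.asIdeal) ∧ γ ∈ J ∧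
      ∀ i : ℕ, ∀ x ∈ symbolicPower J i, y₂ ^ i * x ∈ Ideal.span {γ ^ i} := by
  obtain ⟨γ, hγJ, u, hu0, hus, hdvd⟩ := exists_ne_zero_forall_dvd_mul_of_finite J hfin hht
  have hγ0 : γ ≠ 0 := by
    rintro rfl
    obtain ⟨x, hx, hx0⟩ := Submodule.exists_mem_ne_zero_of_ne_bot hJ
    exact mul_ne_zero hu0 hx0 (zero_dvd_iff.1 (hdvd x hx))
  exact ⟨u, γ, hus, hγJ, fun i x hx ↦
    Ideal.mem_span_singleton.2 (pow_dvd_pow_mul_of_mem_symbolicPower hγ0 hdvd i hx)⟩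

/-- Let `R` be a Noetherian normal domain, let `J` be a nonzero ideal of
`R` of pure height one, and let `y₁` be a nonzero element of `J`. Then there exist an
element `y₂ ∈ R` that lies in no minimal prime of the ideal `y₁R`, and an element
`γ ∈ J`, such that `y₂^i · J^{(i)} ⊆ γ^i R` for all positive integers `i`. -/
theorem stmt3 {R : Type*} [CommRing R] [IsNoetherianRing R] [IsDomain R]
    [IsIntegrallyClosed R]
    (J : Ideal R) (hJne : J ≠ ⊥) (hJ : IsPureHeightOne J)
    (y₁ : R) (hy₁ : y₁ ∈ J) (hy₁0 : y₁ ≠ 0) :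
    ∃ y₂ γ : R, (∀ P ∈ (Ideal.span {y₁}).minimalPrimes, y₂ ∉ P) ∧ γ ∈ J ∧
      ∀ i : ℕ, 0 < i → ∀ x ∈ symbolicPower J i, y₂ ^ i * x ∈ Ideal.span {γ ^ i} := by
  obtain ⟨y₂, γ, hy₂, hγ, hpow⟩ := stmt3_general J hJne
    (s := {p | p.asIdeal ∈ (Ideal.span {y₁}).minimalPrimes})
    ((Ideal.finite_minimalPrimes_of_isNoetherianRing R _).preimage
      (fun _ _ _ _ ↦ PrimeSpectrum.ext))
    fun p hp ↦ Ideal.height_le_one_of_isPrincipal_of_mem_minimalPrimes _ _ hp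
  exact ⟨y₂, γ, fun P hP ↦ hy₂ ⟨P, hP.1.1⟩ hP, hγ, fun i _ ↦ hpow i⟩
end

section
/- Let (R,m) be a Noetherian local ring and let y₁, …, y_d be a system of parameters for R that forms a regular sequence. Suppose s ∈ R is an element whose image generates the socle of R/(y₁, …, y_d), i.e., the colon ideal ((y₁, …, y_d) : m) is equal to (y₁, …, y_d) + sR and s ∉ (y₁, …, y_d). Then for every positive integer t, the element s·(y₁⋯y_d)^{t−1} generates the socle of R/(y₁^t, …, y_d^t): that is, ((y₁^t, …, y_d^t) : m) = (y₁^t, …, y_d^t) + s(y₁⋯y_d)^{t−1}R and s(y₁⋯y_d)^{t−1} ∉ (y₁^t, …, y_d^t). -/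
/-!
Let `a` and `b` be regular modulo `I`, with `a ∈ m`, and let `s` generate the socle of
`R/(I + aR)`. If `m z ⊆ I + abR`, then cancelling `a` from `a z ∈ I + abR` gives `z ≡ b c` modulo
`I`, and cancelling `b` from `m b c ⊆ I + abR` puts `c` in the socle of `R/(I + aR)`; hence `s b`
generates the socle of `R/(I + abR)`. Taking `b` to be a power of `a` raises the exponent of one
parameter.

To treat the parameters one after the other, each must be regular modulo any set of the others,
before and after some of them are replaced by powers. Regular sequences in a Noetherian local ring
have this property because they can be permuted, and replacing one element by a power preserves it.
-/

namespace SocleOfPowers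

variable {R : Type*} [CommRing R]

section OneGenerator

variable {I : Ideal R} {a b c : R}

lemma mul_mem_span_mul_sup_iff (ha : IsSMulRegular (R ⧸ I) a) {x : R} :
    a * x ∈ Ideal.span {a * b} ⊔ I ↔ x ∈ Ideal.span {b} ⊔ I := by
  simp only [Ideal.mem_span_singleton_sup]
  constructor
  · rintro ⟨u, i, hi, hx⟩
    have hcancel : x - u * b ∈ I := by
      refine mem_of_isSMulRegular_quotient_of_smul_mem ha ?_
      rwa [smul_eq_mul, show a * (x - u * b) = i by linear_combination -hx]
    exact ⟨u, x - u * b, hcancel, by ring⟩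
  · rintro ⟨u, i, hi, rfl⟩
    exact ⟨u, a * i, I.mul_mem_left a hi, by ring⟩

lemma isSMulRegular_quotient_span_mul_sup (ha : IsSMulRegular (R ⧸ I) a)
    (hca : IsSMulRegular (R ⧸ Ideal.span {a} ⊔ I) c)
    (hcb : IsSMulRegular (R ⧸ Ideal.span {b} ⊔ I) c) :
    IsSMulRegular (R ⧸ Ideal.span {a * b} ⊔ I) c := by
  rw [isSMulRegular_quotient_iff_mem_of_smul_mem]
  intro z hz
  rw [smul_eq_mul] at hz
  have hle : Ideal.span {a * b} ⊔ I ≤ Ideal.span {a} ⊔ I :=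
    sup_le_sup_right (Ideal.span_singleton_le_span_singleton.2 (dvd_mul_right a b)) I
  obtain ⟨w, i, hi, rfl⟩ := Ideal.mem_span_singleton_sup.1
    (mem_of_isSMulRegular_quotient_of_smul_mem hca (hle hz))
  have hcw : a * (c * w) ∈ Ideal.span {a * b} ⊔ I := by
    convert Ideal.sub_mem _ hz (Ideal.mem_sup_right (I.mul_mem_left c hi)) using 1
    ring
  have hw : w ∈ Ideal.span {b} ⊔ I :=
    mem_of_isSMulRegular_quotient_of_smul_mem hcb ((mul_mem_span_mul_sup_iff ha).1 hcw)
  rw [mul_comm w a]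
  exact add_mem ((mul_mem_span_mul_sup_iff ha).2 hw) (Ideal.mem_sup_right hi)

lemma isSMulRegular_quotient_span_pow_sup (ha : IsSMulRegular (R ⧸ I) a)
    (hc : IsSMulRegular (R ⧸ Ideal.span {a} ⊔ I) c) (n : ℕ) :
    IsSMulRegular (R ⧸ Ideal.span {a ^ n} ⊔ I) c := by
  induction n with
  | zero => simp [isSMulRegular_quotient_iff_mem_of_smul_mem]
  | succ n ih =>
    rw [pow_succ']
    exact isSMulRegular_quotient_span_mul_sup ha hc ih

/-- The image of `s` in `R/I` is nonzero and generates `(I : m)/I`, the socle of `R/I` when `m`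
is the maximal ideal of a local ring `R`. -/
def IsSocleGenerator (m I : Ideal R) (s : R) : Prop :=
  Submodule.colon I (m : Set R) = I ⊔ Ideal.span {s} ∧ s ∉ I

lemma IsSocleGenerator.mul {m : Ideal R} {s : R} (ham : a ∈ m) (ha : IsSMulRegular (R ⧸ I) a)
    (hb : IsSMulRegular (R ⧸ I) b) (h : IsSocleGenerator m (Ideal.span {a} ⊔ I) s) :
    IsSocleGenerator m (Ideal.span {a * b} ⊔ I) (s * b) := by
  obtain ⟨hcolon, hs⟩ := h
  have cancel_b {x : R} : b * x ∈ Ideal.span {a * b} ⊔ I ↔ x ∈ Ideal.span {a} ⊔ I := by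
    rw [mul_comm a b]
    exact mul_mem_span_mul_sup_iff hb
  have mul_mem_colon_iff {x : R} :
      b * x ∈ Submodule.colon (Ideal.span {a * b} ⊔ I) (m : Set R) ↔
        x ∈ Ideal.span {a} ⊔ I ⊔ Ideal.span {s} := by
    simp only [← hcolon, Submodule.mem_colon, smul_eq_mul, mul_assoc, cancel_b]
  refine ⟨le_antisymm (fun z hz => ?_) (sup_le Ideal.le_colon ?_), ?_⟩
  · have haz : a * z ∈ Ideal.span {a * b} ⊔ I := by
      simpa only [smul_eq_mul, mul_comm z a] using Submodule.mem_colon.1 hz a ham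
    obtain ⟨x, i, hi, rfl⟩ :=
      Ideal.mem_span_singleton_sup.1 ((mul_mem_span_mul_sup_iff ha).1 haz)
    have hi' : i ∈ Ideal.span {a * b} ⊔ I := Ideal.mem_sup_right hi
    have hx : x ∈ Ideal.span {a} ⊔ I ⊔ Ideal.span {s} := by
      rw [← mul_mem_colon_iff, mul_comm b x]
      exact (add_mem_cancel_right (Ideal.le_colon hi')).1 hz
    obtain ⟨u, hu, v, hv, rfl⟩ := Submodule.mem_sup.1 hx
    obtain ⟨r, rfl⟩ := Ideal.mem_span_singleton'.1 hv
    refine Submodule.mem_sup.2 ⟨b * u + i, add_mem (cancel_b.2 hu) hi', r * (s * b),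
      Ideal.mul_mem_left _ r (Ideal.mem_span_singleton_self _), by ring⟩
  · rw [Ideal.span_singleton_le_iff_mem, mul_comm s b, mul_mem_colon_iff]
    exact Ideal.mem_sup_right (Ideal.mem_span_singleton_self s)
  · rwa [mul_comm s b, cancel_b]

end OneGenerator

section Family

variable {ι : Type*}

/-- Each member of the family `x` is a nonzerodivisor modulo any set of other members. For finite
families this says that every ordering of `x` is a weakly regular sequence. -/
def IsPermutablyRegular (x : ι → R) : Prop :=
  ∀ (S : Set ι) (j : ι), j ∉ S → IsSMulRegular (R ⧸ Ideal.span (x '' S)) (x j)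

lemma span_image_update_of_mem [DecidableEq ι] (x : ι → R) {k : ι} (a : R) {S : Set ι}
    (hk : k ∈ S) :
    Ideal.span (Function.update x k a '' S) =
      Ideal.span {a} ⊔ Ideal.span (x '' (S \ {k})) := by
  have himage : Function.update x k a '' (S \ {k}) = x '' (S \ {k}) :=
    Set.image_congr fun i hi => Function.update_of_ne hi.2 a x
  rw [← Ideal.span_insert, ← himage, ← Set.insert_sdiff_self_of_mem hk, Set.image_insert_eq]
  simp

lemma IsPermutablyRegular.update_pow [DecidableEq ι] {x : ι → R} (hx : IsPermutablyRegular x)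
    (k : ι) (n : ℕ) : IsPermutablyRegular (Function.update x k (x k ^ n)) := by
  intro S j hj
  by_cases hk : k ∈ S
  · have hjk : j ≠ k := fun h => hj (h ▸ hk)
    have hspan : Ideal.span {x k} ⊔ Ideal.span (x '' (S \ {k})) = Ideal.span (x '' S) := by
      rw [← span_image_update_of_mem x _ hk, Function.update_eq_self]
    rw [span_image_update_of_mem x _ hk, Function.update_of_ne hjk]
    exact isSMulRegular_quotient_span_pow_sup (hx _ k (by simp)) (hspan ▸ hx S j hj) n
  · have himage : Function.update x k (x k ^ n) '' S = x '' S :=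
      Set.image_congr fun i hi => Function.update_of_ne (ne_of_mem_of_not_mem hi hk) _ x
    rw [himage]
    obtain rfl | hjk := eq_or_ne j k
    · rw [Function.update_self]
      exact (hx S j hj).pow n
    · rw [Function.update_of_ne hjk]
      exact hx S j hj

lemma IsSocleGenerator.update_pow [DecidableEq ι] {m : Ideal R} {x : ι → R} {s : R} {k : ι} {n : ℕ}
    (h : IsSocleGenerator m (Ideal.span (Set.range x)) s) (hx : IsPermutablyRegular x)
    (hk : x k ∈ m) (hn : n ≠ 0) :
    IsSocleGenerator m (Ideal.span (Set.range (Function.update x k (x k ^ n))))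
      (s * x k ^ (n - 1)) := by
  have hspan (a : R) : Ideal.span (Set.range (Function.update x k a)) =
      Ideal.span {a} ⊔ Ideal.span (x '' (Set.univ \ {k})) := by
    rw [← Set.image_univ, span_image_update_of_mem x a (Set.mem_univ k)]
  have hxk : IsSMulRegular (R ⧸ Ideal.span (x '' (Set.univ \ {k}))) (x k) := hx _ k (by simp)
  rw [← Function.update_eq_self k x, hspan] at h
  rw [hspan, ← mul_pow_sub_one hn]
  exact h.mul hk hxk (hxk.pow (n - 1))

lemma IsPermutablyRegular.piecewise_pow [DecidableEq ι] {y : ι → R} (hy : IsPermutablyRegular y)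
    (t : ι → ℕ) (T : Finset ι) : IsPermutablyRegular (T.piecewise (fun i => y i ^ t i) y) := by
  induction T using Finset.induction_on with
  | empty => simpa only [Finset.piecewise_empty] using hy
  | insert k T hk ih =>
    simpa only [Finset.piecewise_insert, Finset.piecewise_eq_of_notMem _ _ _ hk]
      using ih.update_pow k (t k)

lemma IsSocleGenerator.piecewise_pow [DecidableEq ι] {m : Ideal R} {y : ι → R} {s : R} {t : ι → ℕ}
    (h : IsSocleGenerator m (Ideal.span (Set.range y)) s) (hy : IsPermutablyRegular y)
    (hym : ∀ i, y i ∈ m) (ht : ∀ i, t i ≠ 0) (T : Finset ι) :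
    IsSocleGenerator m (Ideal.span (Set.range (T.piecewise (fun i => y i ^ t i) y)))
      (s * ∏ i ∈ T, y i ^ (t i - 1)) := by
  induction T using Finset.induction_on with
  | empty => simpa only [Finset.piecewise_empty, Finset.prod_empty, mul_one] using h
  | insert k T hk ih =>
    have hyk : T.piecewise (fun i => y i ^ t i) y k = y k := Finset.piecewise_eq_of_notMem _ _ _ hk
    have hstep := ih.update_pow (hy.piecewise_pow t T) (hyk ▸ hym k) (ht k)
    rw [hyk] at hstep
    rwa [Finset.piecewise_insert, Finset.prod_insert hk, mul_comm (y k ^ _), ← mul_assoc]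

end Family

lemma isPermutablyRegular_of_isRegular_ofFn [IsNoetherianRing R] [IsLocalRing R] {d : ℕ}
    {y : Fin d → R} (hreg : RingTheory.Sequence.IsRegular R (List.ofFn y)) :
    IsPermutablyRegular y := by
  classical
  intro S j hj
  let inside := (List.finRange d).filter (· ∈ S)
  let outside := (List.finRange d).filter (fun i => !decide (i ∈ S))
  have hperm : (List.ofFn y).Perm (inside.map y ++ y j :: (outside.erase j).map y) := by
    have hj_outside : j ∈ outside := by simp [outside, hj]
    rw [List.ofFn_eq_map, ← List.map_cons, ← List.map_append]
    exact ((List.filter_append_perm _ _).symm.trans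
      ((List.perm_cons_erase hj_outside).append_left inside)).map y
  have hweak := (IsLocalRing.isRegular_of_perm hreg hperm).toIsWeaklyRegular
  rw [RingTheory.Sequence.isWeaklyRegular_append_iff,
    RingTheory.Sequence.isWeaklyRegular_cons_iff] at hweak
  have hspan : Ideal.ofList (inside.map y) • (⊤ : Submodule R R) = Ideal.span (y '' S) := by
    rw [smul_eq_mul, Ideal.mul_top, Ideal.ofList]
    congr 1
    ext r
    simp [inside]
  exact hspan ▸ hweak.2.1

end SocleOfPowers

theorem stmt4_general {R ι : Type*} [CommRing R] [Fintype ι] {m : Ideal R} {y : ι → R} {s : R}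
    (hy : ∀ i, y i ∈ m) (hreg : SocleOfPowers.IsPermutablyRegular y)
    (hs : SocleOfPowers.IsSocleGenerator m (Ideal.span (Set.range y)) s)
    {t : ι → ℕ} (ht : ∀ i, t i ≠ 0) :
    SocleOfPowers.IsSocleGenerator m (Ideal.span (Set.range fun i => y i ^ t i))
      (s * ∏ i, y i ^ (t i - 1)) := by
  classical
  simpa only [Finset.piecewise_univ] using hs.piecewise_pow hreg hy ht Finset.univ

/-- Let `(R,m)` be a Noetherian local ring and let `y₁, …, y_d` be a system
of parameters for `R` that forms a regular sequence. Suppose `s ∈ R` is an element whose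
image generates the socle of `R/(y₁, …, y_d)`, i.e. `((y₁, …, y_d) : m) = (y₁, …, y_d) + sR`
and `s ∉ (y₁, …, y_d)`. Then for every positive integer `t`, the element
`s·(y₁⋯y_d)^{t−1}` generates the socle of `R/(y₁^t, …, y_d^t)`. -/
theorem stmt4 {R : Type*} [CommRing R] [IsNoetherianRing R] [IsLocalRing R]
    (d : ℕ) (hd : ringKrullDim R = d) (y : Fin d → R)
    (hy : ∀ i, y i ∈ IsLocalRing.maximalIdeal R)
    (hsop : (Ideal.span (Set.range y)).radical = IsLocalRing.maximalIdeal R)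
    (hreg : RingTheory.Sequence.IsRegular R (List.ofFn y))
    (s : R)
    (hsoc : Submodule.colon (Ideal.span (Set.range y))
        (IsLocalRing.maximalIdeal R)
      = Ideal.span (Set.range y) ⊔ Ideal.span {s})
    (hs : s ∉ Ideal.span (Set.range y)) :
    ∀ t : ℕ, 0 < t →
      Submodule.colon (Ideal.span (Set.range fun i => y i ^ t))
          (IsLocalRing.maximalIdeal R)
        = Ideal.span (Set.range fun i => y i ^ t)
            ⊔ Ideal.span {s * (∏ i, y i) ^ (t - 1)}
      ∧ s * (∏ i, y i) ^ (t - 1) ∉ Ideal.span (Set.range fun i => y i ^ t) := by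
  intro t ht
  simpa only [SocleOfPowers.IsSocleGenerator, Finset.prod_pow] using
    stmt4_general hy (SocleOfPowers.isPermutablyRegular_of_isRegular_ofFn hreg) ⟨hsoc, hs⟩
      fun _ => ht.ne'
end
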